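/- arXiv:1706.00873 — 3 statements merged into one kernel-verified Lean document; each statement's English description precedes it below -/
import Mathlib

section
/- Let κ > 0, η̄ > 0, ρ̄ ∈ ℝ, and ξ ∈ ℂ. Set β := κ + i ρ̄ η̄ ξ, let d ∈ ℂ satisfy d² = η̄²(ξ² − iξ) + β², and assume d ≠ 0 and β − d ≠ 0. Set g := (β + d)/(β − d) and define D : ℝ → ℂ by D(τ) := ((β + d)/η̄²)·(1 − e^{dτ})/(1 − g e^{dτ}). Then D(0) = 0, and for every τ ∈ ℝ with 1 − g e^{dτ} ≠ 0, D is differentiable at τ and satisfies the Riccati equation D'(τ) = ½(−ξ² + iξ) − β D(τ) + ½ η̄² D(τ)². -/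
open Complex

/-!
Since `β² - d² = -η̄² (ξ² - iξ)`, the right-hand side of the Riccati equation factors as
`(η̄² D - (β + d)) (η̄² D - (β - d)) / (2 η̄²)`. With `E = e^{dτ}` and `β + d = g (β - d)`, the
factors are `(β + d) (g - 1) E / (1 - g E)` and `2 d / (1 - g E)`, and the resulting product is
the derivative of `D` given by the quotient rule.
-/

/-- The Heston Riccati exponent: `D(τ) = ((β+d)/η̄²)(1 - e^{dτ})/(1 - g e^{dτ})`
satisfies `D(0) = 0` and the Riccati ODE
`D' = ½(-ξ² + iξ) - βD + ½η̄²D²` wherever `1 - g e^{dτ} ≠ 0`. -/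
theorem heston_riccati_D (κ ηb ρb : ℝ) (hκ : 0 < κ) (hηb : 0 < ηb) (ξ β d : ℂ)
    (hβ : β = (κ : ℂ) + I * (ρb : ℂ) * (ηb : ℂ) * ξ)
    (hd : d ^ 2 = (ηb : ℂ) ^ 2 * (ξ ^ 2 - I * ξ) + β ^ 2)
    (hd0 : d ≠ 0) (hβd : β - d ≠ 0)
    (g : ℂ) (hg : g = (β + d) / (β - d))
    (D : ℝ → ℂ)
    (hD : D = fun τ : ℝ => ((β + d) / (ηb : ℂ) ^ 2) *
      (1 - Complex.exp (d * (τ : ℂ))) / (1 - g * Complex.exp (d * (τ : ℂ)))) :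
    D 0 = 0 ∧
      ∀ τ : ℝ, 1 - g * Complex.exp (d * (τ : ℂ)) ≠ 0 →
        HasDerivAt D
          ((1 / 2) * (-ξ ^ 2 + I * ξ) - β * D τ + (1 / 2) * (ηb : ℂ) ^ 2 * (D τ) ^ 2) τ := by
  have hη : (ηb : ℂ) ≠ 0 := by exact_mod_cast hηb.ne'
  have hgs : β + d = g * (β - d) := by rw [hg]; field_simp
  -- The constant term, expressed through the two roots `(β ± d) / η̄²` of the quadratic.
  have hc : (1 / 2) * (-ξ ^ 2 + I * ξ) = (β ^ 2 - d ^ 2) / (2 * (ηb : ℂ) ^ 2) := by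
    rw [hd]; field_simp; ring
  refine ⟨by simp [hD], fun τ hN => ?_⟩
  have hE : HasDerivAt (fun t : ℝ => Complex.exp (d * (t : ℂ)))
      (Complex.exp (d * (τ : ℂ)) * d) τ := by
    have h : HasDerivAt (fun t : ℝ => d * (t : ℂ)) d τ := by
      simpa using (Complex.ofRealCLM.hasDerivAt (x := τ)).const_mul d
    exact h.cexp
  have hquot := ((hE.const_sub 1).const_mul ((β + d) / (ηb : ℂ) ^ 2)).div
    ((hE.const_mul g).const_sub 1) hN
  rw [hc, hD]
  refine hquot.congr_deriv ?_
  beta_reduce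
  generalize Complex.exp (d * (τ : ℂ)) = E at hN ⊢
  obtain ⟨N, hNE⟩ : ∃ N, 1 - g * E = N := ⟨_, rfl⟩
  rw [hNE] at hN ⊢
  -- Factor `η̄² D - (β + d)` and `η̄² D - (β - d)`: the second is where `g` cancels the `E` term.
  have h1 : (β + d) * (1 - E) / N - (β + d) = (β + d) * (g - 1) * E / N := by
    rw [div_sub' hN, ← hNE]; ring
  have h2 : (β + d) * (1 - E) / N - (β - d) = 2 * d / N := by
    rw [div_sub' hN]
    congr 1
    linear_combination (β - d) * hNE - E * hgs
  calc _ = (β + d) * (g - 1) * E / N * (2 * d / N) / (2 * (ηb : ℂ) ^ 2) := by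
        field_simp
        linear_combination (β + d) * E * hNE
    _ = _ := by
        rw [← h1, ← h2]; field_simp; ring
end

section
/- Let κ, m ∈ ℝ, η̄ > 0, β ∈ ℂ, ξ ∈ ℂ, and V₁₂, V₂₁, V₀₃ ∈ ℂ. Let C, D : ℝ → ℂ be differentiable with D'(τ) = ½(−ξ² + iξ) − βD(τ) + ½η̄²D(τ)² and C'(τ) = κmD(τ) for all τ, and set G(τ, v) := exp(C(τ) + vD(τ)). Let f₀, f₁ : ℝ → ℂ be differentiable with f₁'(τ) = (η̄²D(τ) − β) f₁(τ) − iξ V₁₂ D(τ)² − ξ² V₂₁ D(τ) + V₀₃ D(τ)³, f₀'(τ) = κm f₁(τ), and f₀(0) = f₁(0) = 0. Define P(τ, v) := (f₀(τ) + v f₁(τ)) G(τ, v). Then P(0, v) = 0 for all v, and for every (τ, v) ∈ ℝ × ℝ, −∂P/∂τ + ½v(−ξ² + iξ)P + (κm − βv)∂P/∂v + ½η̄²v ∂²P/∂v² = −v(−iξ V₁₂ D(τ)² − ξ² V₂₁ D(τ) + V₀₃ D(τ)³) G(τ, v). -/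
/-!
For fixed `τ`, a `v`-derivative of `(a + v b) exp (c + v d)` has the same affine-times-exponential
form (`hasDerivAt_affine_mul_exp`), so both `∂_v P` and `∂²_v P` come from one computation. The
`τ`-derivative is the product rule with the given ODEs. After substitution, the terms carrying the
factor `f₀ + v f₁` cancel because `G` solves the homogeneous equation (the Riccati equation for `D`
and `C' = κ m D`), and the ODEs for `f₀` and `f₁` leave exactly the source term.
-/

open Complex

/-- The coefficients of the derivative are grouped as a new affine function of `v`, so that the
lemma can be applied again to its own output. -/
lemma hasDerivAt_affine_mul_exp (a b c d : ℂ) (v : ℝ) :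
    HasDerivAt (fun x : ℝ => (a + (x : ℂ) * b) * Complex.exp (c + (x : ℂ) * d))
      (((b + a * d) + (v : ℂ) * (b * d)) * Complex.exp (c + (v : ℂ) * d)) v := by
  have hx : HasDerivAt (fun x : ℝ => (x : ℂ)) 1 v := Complex.ofRealCLM.hasDerivAt
  have h := ((hx.mul_const b).const_add a).mul ((hx.mul_const d).const_add c).cexp
  refine h.congr_deriv ?_
  ring

/-- The fast-scale correction ansatz `P(τ,v) = (f₀(τ) + v f₁(τ)) G(τ,v)` solves the
sourced Fourier-transformed Heston PDE
`-∂_τ P + ½v(-ξ²+iξ)P + (κm - βv)∂_v P + ½η̄²v ∂²_v P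
  = -v(-iξV₁₂D² - ξ²V₂₁D + V₀₃D³)G`
with zero initial condition, when `f₀, f₁` solve the stated linear ODE system. -/
theorem heston_fast_scale_correction (κ m ηb : ℝ) (hηb : 0 < ηb) (β ξ V₁₂ V₂₁ V₀₃ : ℂ)
    (C D : ℝ → ℂ)
    (hD : ∀ τ : ℝ, HasDerivAt D
      ((1 / 2) * (-ξ ^ 2 + I * ξ) - β * D τ + (1 / 2) * (ηb : ℂ) ^ 2 * (D τ) ^ 2) τ)
    (hC : ∀ τ : ℝ, HasDerivAt C ((κ : ℂ) * (m : ℂ) * D τ) τ)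
    (G : ℝ → ℝ → ℂ)
    (hG : G = fun (τ v : ℝ) => Complex.exp (C τ + (v : ℂ) * D τ))
    (f₀ f₁ : ℝ → ℂ)
    (hf₁ : ∀ τ : ℝ, HasDerivAt f₁
      (((ηb : ℂ) ^ 2 * D τ - β) * f₁ τ
        - I * ξ * V₁₂ * (D τ) ^ 2 - ξ ^ 2 * V₂₁ * D τ + V₀₃ * (D τ) ^ 3) τ)
    (hf₀ : ∀ τ : ℝ, HasDerivAt f₀ ((κ : ℂ) * (m : ℂ) * f₁ τ) τ)
    (hf₀0 : f₀ 0 = 0) (hf₁0 : f₁ 0 = 0)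
    (P : ℝ → ℝ → ℂ)
    (hP : P = fun (τ v : ℝ) => (f₀ τ + (v : ℂ) * f₁ τ) * G τ v) :
    (∀ v : ℝ, P 0 v = 0) ∧
      ∀ τ v : ℝ,
        -deriv (fun τ' : ℝ => P τ' v) τ
        + (1 / 2) * (v : ℂ) * (-ξ ^ 2 + I * ξ) * P τ v
        + ((κ : ℂ) * (m : ℂ) - β * (v : ℂ)) * deriv (fun v' : ℝ => P τ v') v
        + (1 / 2) * (ηb : ℂ) ^ 2 * (v : ℂ) *
            deriv (fun v' : ℝ => deriv (fun v'' : ℝ => P τ v'') v') v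
        = -(v : ℂ) * (-I * ξ * V₁₂ * (D τ) ^ 2 - ξ ^ 2 * V₂₁ * D τ + V₀₃ * (D τ) ^ 3)
            * G τ v := by
  subst hP hG
  refine ⟨fun v => by simp [hf₀0, hf₁0], fun τ v => ?_⟩
  have hv (x : ℝ) := (hasDerivAt_affine_mul_exp (f₀ τ) (f₁ τ) (C τ) (D τ) x).deriv
  have hvv := (hasDerivAt_affine_mul_exp (f₁ τ + f₀ τ * D τ) (f₁ τ * D τ) (C τ) (D τ) v).deriv
  have hτ := (((hf₀ τ).add ((hf₁ τ).const_mul (v : ℂ))).mul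
    ((hC τ).add ((hD τ).const_mul (v : ℂ))).cexp).deriv
  have hτ' : deriv (fun t : ℝ => (f₀ t + (v : ℂ) * f₁ t) * Complex.exp (C t + (v : ℂ) * D t)) τ
      = _ := hτ
  simp only [hv, hvv, hτ', Pi.add_apply]
  ring
end

section
/- Let κ, m ∈ ℝ, η̄ > 0, β ∈ ℂ, ξ ∈ ℂ. Let C, D : ℝ → ℂ be differentiable with D'(τ) = ½(−ξ² + iξ) − βD(τ) + ½η̄²D(τ)² and C'(τ) = κmD(τ) for all τ, and set G(τ, v) := exp(C(τ) + vD(τ)). Let S₀, S₁ : ℝ → ℂ be arbitrary functions, and let g₀, g₁, g₂ : ℝ → ℂ be differentiable with g₂'(τ) = −2(β − η̄²D(τ)) g₂(τ) + S₁(τ), g₁'(τ) = −(β − η̄²D(τ)) g₁(τ) + (2κm + η̄²) g₂(τ) + S₀(τ), g₀'(τ) = κm g₁(τ), and g₀(0) = g₁(0) = g₂(0) = 0. Define P(τ, v) := (g₀(τ) + v g₁(τ) + v² g₂(τ)) G(τ, v). Then P(0, v) = 0 for all v, and for every (τ, v) ∈ ℝ × ℝ, −∂P/∂τ + ½v(−ξ²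 + iξ)P + (κm − βv)∂P/∂v + ½η̄²v ∂²P/∂v² = −v(S₀(τ) + v S₁(τ)) G(τ, v). -/
/-!
Writing `Q = g₀ + v g₁ + v² g₂`, the product `Q G` is differentiated explicitly. In `v`, quadratic
polynomials times `exp (C + v D)` are stable under differentiation (`hasDerivAt_quadratic_mul_exp`),
so one lemma gives both `∂_v P` and `∂²_v P`. In `τ`, the ODEs for `C, D, g₀, g₁, g₂` give `∂_τ P`.
The Riccati equation for `D` and the equation for `C` say that `G` is annihilated by the Heston
operator; what remains is a polynomial in `v` times `G`, and the ODEs for the `gᵢ` are exactly the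
matching of its coefficients with those of `-v (S₀ + v S₁)`.
-/

open Complex

/-- Differentiation in `v` maps quadratic polynomials times `exp (E + v F)` to functions of the same
form, which allows the lemma to be iterated. -/
lemma hasDerivAt_quadratic_mul_exp (a b c E F : ℂ) (v : ℝ) :
    HasDerivAt (fun v : ℝ => (a + (v : ℂ) * b + (v : ℂ) ^ 2 * c) * Complex.exp (E + (v : ℂ) * F))
      (((b + a * F) + (v : ℂ) * (2 * c + b * F) + (v : ℂ) ^ 2 * (c * F))
        * Complex.exp (E + (v : ℂ) * F)) v := by
  have hv : HasDerivAt (fun v : ℝ => (v : ℂ)) 1 v := Complex.ofRealCLM.hasDerivAt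
  have h := (((hv.mul_const b).const_add a).add ((hv.pow 2).mul_const c)).mul
    (((hv.mul_const F).const_add E).cexp)
  refine h.congr_deriv ?_
  simp only [Pi.add_apply, Pi.pow_apply]
  push_cast
  ring

/-- The slow-scale correction ansatz `P(τ,v) = (g₀ + v g₁ + v² g₂) G` solves the
sourced Fourier-transformed Heston PDE
`-∂_τ P + ½v(-ξ²+iξ)P + (κm - βv)∂_v P + ½η̄²v ∂²_v P = -v(S₀ + vS₁)G`
with zero initial condition, when `g₀, g₁, g₂` solve the stated triangular
linear ODE system. -/
theorem heston_slow_scale_correction (κ m ηb : ℝ) (hηb : 0 < ηb) (β ξ : ℂ)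
    (C D : ℝ → ℂ)
    (hD : ∀ τ : ℝ, HasDerivAt D
      ((1 / 2) * (-ξ ^ 2 + I * ξ) - β * D τ + (1 / 2) * (ηb : ℂ) ^ 2 * (D τ) ^ 2) τ)
    (hC : ∀ τ : ℝ, HasDerivAt C ((κ : ℂ) * (m : ℂ) * D τ) τ)
    (G : ℝ → ℝ → ℂ)
    (hG : G = fun (τ v : ℝ) => Complex.exp (C τ + (v : ℂ) * D τ))
    (S₀ S₁ : ℝ → ℂ) (g₀ g₁ g₂ : ℝ → ℂ)
    (hg₂ : ∀ τ : ℝ, HasDerivAt g₂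
      (-2 * (β - (ηb : ℂ) ^ 2 * D τ) * g₂ τ + S₁ τ) τ)
    (hg₁ : ∀ τ : ℝ, HasDerivAt g₁
      (-(β - (ηb : ℂ) ^ 2 * D τ) * g₁ τ
        + (2 * (κ : ℂ) * (m : ℂ) + (ηb : ℂ) ^ 2) * g₂ τ + S₀ τ) τ)
    (hg₀ : ∀ τ : ℝ, HasDerivAt g₀ ((κ : ℂ) * (m : ℂ) * g₁ τ) τ)
    (hg₀0 : g₀ 0 = 0) (hg₁0 : g₁ 0 = 0) (hg₂0 : g₂ 0 = 0)
    (P : ℝ → ℝ → ℂ)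
    (hP : P = fun (τ v : ℝ) => (g₀ τ + (v : ℂ) * g₁ τ + (v : ℂ) ^ 2 * g₂ τ) * G τ v) :
    (∀ v : ℝ, P 0 v = 0) ∧
      ∀ τ v : ℝ,
        -deriv (fun τ' : ℝ => P τ' v) τ
        + (1 / 2) * (v : ℂ) * (-ξ ^ 2 + I * ξ) * P τ v
        + ((κ : ℂ) * (m : ℂ) - β * (v : ℂ)) * deriv (fun v' : ℝ => P τ v') v
        + (1 / 2) * (ηb : ℂ) ^ 2 * (v : ℂ) *
            deriv (fun v' : ℝ => deriv (fun v'' : ℝ => P τ v'') v') v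
        = -(v : ℂ) * (S₀ τ + (v : ℂ) * S₁ τ) * G τ v := by
  subst hP hG
  refine ⟨fun v => by simp [hg₀0, hg₁0, hg₂0], fun τ v => ?_⟩
  have hv1 : ∀ w : ℝ, deriv (fun v'' : ℝ => (g₀ τ + (v'' : ℂ) * g₁ τ + (v'' : ℂ) ^ 2 * g₂ τ)
      * Complex.exp (C τ + (v'' : ℂ) * D τ)) w = _ :=
    fun w => (hasDerivAt_quadratic_mul_exp (g₀ τ) (g₁ τ) (g₂ τ) (C τ) (D τ) w).deriv
  have hτ := ((((hg₀ τ).add ((hg₁ τ).const_mul (v : ℂ))).add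
    ((hg₂ τ).const_mul ((v : ℂ) ^ 2))).mul
    (((hC τ).add ((hD τ).const_mul (v : ℂ))).cexp)).deriv
  have hτ' : deriv (fun τ' : ℝ => (g₀ τ' + (v : ℂ) * g₁ τ' + (v : ℂ) ^ 2 * g₂ τ')
      * Complex.exp (C τ' + (v : ℂ) * D τ')) τ = _ := hτ
  simp only [hv1, hτ', (hasDerivAt_quadratic_mul_exp _ _ _ _ _ _).deriv, Pi.add_apply]
  ring
end
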